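/- arXiv:1801.10298 — 2 statements merged into one kernel-verified Lean document; each statement's English description precedes it below -/
import Mathlib

section
/- There exists a Lie algebra homomorphism π from the Lie algebra 𝔬_{p+q}(ℂ) := { X ∈ M_{p+q}(ℂ) : Xᵀ·I_{p,q} + I_{p,q}·X = 0 } (with the commutator bracket, where I_{p,q} = diag(1_p,−1_q)) to the ℂ-linear endomorphisms of R such that, writing E_{a,b} for the matrix units: π(E_{i,j} − E_{j,i}) = −x_j∂_{x_i} + x_i∂_{x_j} for all 1 ≤ i,j ≤ p; π(E_{p+i,p+j} − E_{p+j,p+i}) = −y_j∂_{y_i} + y_i∂_{y_j} for all 1 ≤ i,j ≤ q; and π(E_{i,p+j} + E_{p+j,i}) = i·(x_i y_j + ∂_{x_i}∂_{y_j}) (i the imaginary unit) for all 1 ≤ i ≤ p, 1 ≤ j ≤ q. -/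
noncomputable section

/-- The polynomial ring `ℂ[x₁,…,x_p, y₁,…,y_q]`. -/
abbrev Rpq (p q : ℕ) := MvPolynomial (Fin p ⊕ Fin q) ℂ

/-- Multiplication by `x_i`. -/
def xop (p q : ℕ) (i : Fin p) : Module.End ℂ (Rpq p q) :=
  LinearMap.mulLeft ℂ (MvPolynomial.X (Sum.inl i))

/-- Multiplication by `y_j`. -/
def yop (p q : ℕ) (j : Fin q) : Module.End ℂ (Rpq p q) :=
  LinearMap.mulLeft ℂ (MvPolynomial.X (Sum.inr j))

/-- The partial derivative `∂_{x_i}`. -/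
def dx (p q : ℕ) (i : Fin p) : Module.End ℂ (Rpq p q) :=
  (MvPolynomial.pderiv (Sum.inl i)).toLinearMap

/-- The partial derivative `∂_{y_j}`. -/
def dy (p q : ℕ) (j : Fin q) : Module.End ℂ (Rpq p q) :=
  (MvPolynomial.pderiv (Sum.inr j)).toLinearMap

/-- The Euler operator `E_x = Σ_i x_i ∂_{x_i}`. -/
def Eop_x (p q : ℕ) : Module.End ℂ (Rpq p q) := ∑ i : Fin p, xop p q i * dx p q i

/-- The Euler operator `E_y = Σ_j y_j ∂_{y_j}`. -/
def Eop_y (p q : ℕ) : Module.End ℂ (Rpq p q) := ∑ j : Fin q, yop p q j * dy p q j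

/-- Multiplication by `r_x² = Σ_i x_i²`. -/
def rx2 (p q : ℕ) : Module.End ℂ (Rpq p q) :=
  LinearMap.mulLeft ℂ (∑ i : Fin p, MvPolynomial.X (Sum.inl i) ^ 2)

/-- Multiplication by `r_y² = Σ_j y_j²`. -/
def ry2 (p q : ℕ) : Module.End ℂ (Rpq p q) :=
  LinearMap.mulLeft ℂ (∑ j : Fin q, MvPolynomial.X (Sum.inr j) ^ 2)

/-- The Laplacian `Δ_x = Σ_i ∂_{x_i}²`. -/
def Δx (p q : ℕ) : Module.End ℂ (Rpq p q) := ∑ i : Fin p, dx p q i * dx p q i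

/-- The Laplacian `Δ_y = Σ_j ∂_{y_j}²`. -/
def Δy (p q : ℕ) : Module.End ℂ (Rpq p q) := ∑ j : Fin q, dy p q j * dy p q j

/-- `H = −E_x − (p/2)·id + E_y + (q/2)·id`. -/
def Hop (p q : ℕ) : Module.End ℂ (Rpq p q) :=
  -Eop_x p q - ((p : ℂ) / 2) • 1 + Eop_y p q + ((q : ℂ) / 2) • 1

/-- `X⁺ = −(1/2)(Δ_x + r_y²)`. -/
def Xplus (p q : ℕ) : Module.End ℂ (Rpq p q) :=
  -((1 : ℂ) / 2) • (Δx p q + ry2 p q)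

/-- `X⁻ = (1/2)(r_x² + Δ_y)`. -/
def Xminus (p q : ℕ) : Module.End ℂ (Rpq p q) :=
  ((1 : ℂ) / 2) • (rx2 p q + Δy p q)

/-- The matrix `I_{p,q} = diag(1_p, −1_q)` over `ℂ`. -/
def IpqC (p q : ℕ) : Matrix (Fin (p + q)) (Fin (p + q)) ℂ :=
  Matrix.diagonal (fun i => if (i : ℕ) < p then 1 else -1)

end

/-!
The Jordan–Schwinger map `A ↦ ∑ A_{ab} u_a v_b` is a Lie algebra homomorphism on all of `𝔤𝔩` as soon
as the `u_a`, `v_b` satisfy the canonical commutation relations. Multiplications and partial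
derivatives satisfy them, and still do after the Fourier-type substitution
`(y_j, ∂_{y_j}) ↦ (i ∂_{y_j}, i y_j)` in the second group of variables only. Under this twist the
generators `E_{p+i,p+j} - E_{p+j,p+i}` keep their image, while `E_{i,p+j} + E_{p+j,i}` goes to
`i (x_i y_j + ∂_{x_i} ∂_{y_j})`.
-/

attribute [local instance] LieRing.ofAssociativeRing

theorem mul_lie_mul {S : Type*} [Ring S] (a b c d : S) :
    ⁅a * b, c * d⁆ = a * ⁅b, c⁆ * d + ⁅a, c⁆ * d * b + c * ⁅a, d⁆ * b + a * c * ⁅b, d⁆ := by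
  simp only [Ring.lie_def]
  noncomm_ring

theorem single_lie_single {R ι : Type*} [Fintype ι] [DecidableEq ι] [CommRing R]
    (a b c d : ι) (r s : R) :
    ⁅Matrix.single a b r, Matrix.single c d s⁆ =
      (if b = c then Matrix.single a d (r * s) else 0) -
        if a = d then Matrix.single c b (r * s) else 0 := by
  rw [Ring.lie_def]
  congr 1
  · split_ifs with h
    · rw [h, Matrix.single_mul_single_same]
    · exact Matrix.single_mul_single_of_ne _ _ _ _ h _
  · split_ifs with h
    · rw [h, Matrix.single_mul_single_same, mul_comm]
    · exact Matrix.single_mul_single_of_ne _ _ _ _ (Ne.symm h) _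

/-- The canonical commutation relations of the Weyl algebra: `u` plays the role of the coordinates
(creation operators) and `v` that of the partial derivatives (annihilation operators). -/
structure IsCanonicalPair {ι S : Type*} [DecidableEq ι] [Ring S] (u v : ι → S) : Prop where
  commute_left (a b : ι) : Commute (u a) (u b)
  commute_right (a b : ι) : Commute (v a) (v b)
  lie_eq (a b : ι) : ⁅v a, u b⁆ = if a = b then 1 else 0

namespace IsCanonicalPair

section Ring

variable {ι S : Type*} [DecidableEq ι] [Ring S] {u v : ι → S}

theorem mul_eq_add_ite (h : IsCanonicalPair u v) (a b : ι) :
    v a * u b = u b * v a + if a = b then 1 else 0 := by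
  rw [← h.lie_eq, Ring.lie_def, add_sub_cancel]

protected theorem mul_lie_mul (h : IsCanonicalPair u v) (a b c d : ι) :
    ⁅u a * v b, u c * v d⁆ =
      (if b = c then u a * v d else 0) - if a = d then u c * v b else 0 := by
  have lie_left_right : ⁅u a, v d⁆ = -if a = d then 1 else 0 := by
    simp only [← lie_skew (u a), h.lie_eq, eq_comm (a := d)]
  rw [mul_lie_mul, h.lie_eq, lie_left_right, (h.commute_left a c).lie_eq,
    (h.commute_right b d).lie_eq]
  split_ifs <;> simp [sub_eq_add_neg]

end Ring

theorem partialFourier {R S m n : Type*} [DecidableEq m] [DecidableEq n] [CommRing R] [Ring S]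
    [Algebra R S] {u v : m ⊕ n → S} (h : IsCanonicalPair u v) {ε : R} (hε : ε * ε = -1) :
    IsCanonicalPair (Sum.elim (u ∘ .inl) (ε • v ∘ .inr)) (Sum.elim (v ∘ .inl) (ε • u ∘ .inr)) where
  commute_left := by
    have commute_u_v (i : m) (j : n) : Commute (u (.inl i)) (v (.inr j)) := by
      rw [commute_iff_lie_eq, ← lie_skew, h.lie_eq, if_neg Sum.inr_ne_inl, neg_zero]
    rintro (i | i) (j | j)
    · exact h.commute_left _ _
    · exact (commute_u_v i j).smul_right ε
    · exact ((commute_u_v j i).smul_right ε).symm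
    · exact ((h.commute_right _ _).smul_left ε).smul_right ε
  commute_right := by
    have commute_v_u (i : m) (j : n) : Commute (v (.inl i)) (u (.inr j)) := by
      rw [commute_iff_lie_eq, h.lie_eq, if_neg Sum.inl_ne_inr]
    rintro (i | i) (j | j)
    · exact h.commute_right _ _
    · exact (commute_v_u i j).smul_right ε
    · exact ((commute_v_u j i).smul_right ε).symm
    · exact ((h.commute_left _ _).smul_left ε).smul_right ε
  lie_eq := by
    rintro (i | i) (j | j)
    · simpa using h.lie_eq (.inl i) (.inl j)
    · simpa using ((h.commute_right (.inl i) (.inr j)).smul_right ε).lie_eq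
    · simpa using ((h.commute_left (.inr i) (.inl j)).smul_left ε).lie_eq
    · calc ⁅ε • u (.inr i), ε • v (.inr j)⁆
        _ = (ε * ε) • ⁅u (.inr i), v (.inr j)⁆ := by rw [smul_lie, LieAlgebra.lie_smul, mul_smul]
        _ = ⁅v (.inr j), u (.inr i)⁆ := by rw [hε, neg_one_smul, lie_skew]
        _ = if Sum.inr i = Sum.inr j then 1 else 0 := by simp [h.lie_eq, eq_comm (a := j)]

end IsCanonicalPair

/-- The Jordan–Schwinger map `A ↦ ∑ A_{ab} u_a v_b`, the second quantization of a matrix. -/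
def jordanSchwinger (R : Type*) {ι S : Type*} [Fintype ι] [DecidableEq ι] [CommRing R] [Ring S]
    [Algebra R S] (u v : ι → S) : Matrix ι ι R →ₗ[R] S :=
  Matrix.liftLinear R fun a b => LinearMap.toSpanSingleton R S (u a * v b)

section JordanSchwinger

variable {R ι S : Type*} [Fintype ι] [DecidableEq ι] [CommRing R] [Ring S] [Algebra R S]
  {u v : ι → S}

theorem jordanSchwinger_single (a b : ι) (r : R) :
    jordanSchwinger R u v (Matrix.single a b r) = r • (u a * v b) := by
  rw [jordanSchwinger, Matrix.liftLinear_single, LinearMap.toSpanSingleton_apply]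

namespace IsCanonicalPair

theorem jordanSchwinger_lie_single (h : IsCanonicalPair u v) (a b c d : ι) (r s : R) :
    jordanSchwinger R u v ⁅Matrix.single a b r, Matrix.single c d s⁆ =
      ⁅jordanSchwinger R u v (Matrix.single a b r),
        jordanSchwinger R u v (Matrix.single c d s)⁆ := by
  simp only [single_lie_single, jordanSchwinger_single, smul_lie, LieAlgebra.lie_smul,
    h.mul_lie_mul, map_sub, apply_ite (jordanSchwinger R u v), map_zero, smul_sub, smul_ite,
    smul_zero, mul_smul, smul_comm s]

theorem jordanSchwinger_lie (h : IsCanonicalPair u v) (A B : Matrix ι ι R) :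
    jordanSchwinger R u v ⁅A, B⁆ = ⁅jordanSchwinger R u v A, jordanSchwinger R u v B⁆ := by
  rw [Matrix.matrix_eq_sum_single A, Matrix.matrix_eq_sum_single B]
  simp only [sum_lie, lie_sum, map_sum, h.jordanSchwinger_lie_single]

/-- The Jordan–Schwinger map of a canonical pair as a representation of `𝔤𝔩`. -/
def jordanSchwingerHom (h : IsCanonicalPair u v) : Matrix ι ι R →ₗ⁅R⁆ S where
  __ := jordanSchwinger R u v
  map_lie' := h.jordanSchwinger_lie _ _

theorem jordanSchwingerHom_single_one (h : IsCanonicalPair u v) (a b : ι) :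
    h.jordanSchwingerHom (Matrix.single a b (1 : R)) = u a * v b :=
  (jordanSchwinger_single a b 1).trans (one_smul R _)

end IsCanonicalPair

end JordanSchwinger

theorem commute_pderiv (R : Type*) {σ : Type*} [CommRing R] (i j : σ) :
    Commute (MvPolynomial.pderiv i : Derivation R (MvPolynomial σ R) _).toLinearMap
      (MvPolynomial.pderiv j).toLinearMap := by
  classical
  have lie_eq_zero : ⁅(MvPolynomial.pderiv i : Derivation R (MvPolynomial σ R) _),
      (MvPolynomial.pderiv j : Derivation R (MvPolynomial σ R) _)⁆ = 0 :=
    MvPolynomial.derivation_ext fun k => by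
      simp [Derivation.commutator_apply, MvPolynomial.pderiv_X, Pi.single_apply, apply_ite]
  rw [commute_iff_lie_eq, ← Derivation.commutator_coe_linear_map, lie_eq_zero,
    Derivation.coe_zero_linearMap]

theorem isCanonicalPair_X_pderiv (R σ : Type*) [CommRing R] [DecidableEq σ] :
    IsCanonicalPair (fun i : σ => LinearMap.mulLeft R (MvPolynomial.X i : MvPolynomial σ R))
      (fun i => (MvPolynomial.pderiv i).toLinearMap) where
  commute_left i j := (Commute.all _ _).map (Algebra.lmul R (MvPolynomial σ R))
  commute_right := commute_pderiv R
  lie_eq i j := by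
    refine LinearMap.ext fun f => ?_
    rcases eq_or_ne i j with rfl | hij
    · simp [Ring.lie_def]
    · simp [Ring.lie_def, MvPolynomial.pderiv_X_of_ne hij.symm, hij]

theorem stmt_2_general {R S m n : Type*} [Fintype m] [DecidableEq m] [Fintype n] [DecidableEq n]
    [CommRing R] [Ring S] [Algebra R S] {u v : m ⊕ n → S} (h : IsCanonicalPair u v) {ε : R}
    (hε : ε * ε = -1) :
    ∃ Φ : Matrix (m ⊕ n) (m ⊕ n) R →ₗ⁅R⁆ S,
      (∀ i j : m,
        Φ (Matrix.single (.inl i) (.inl j) 1 - Matrix.single (.inl j) (.inl i) 1) =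
          -(u (.inl j) * v (.inl i)) + u (.inl i) * v (.inl j)) ∧
      (∀ i j : n,
        Φ (Matrix.single (.inr i) (.inr j) 1 - Matrix.single (.inr j) (.inr i) 1) =
          -(u (.inr j) * v (.inr i)) + u (.inr i) * v (.inr j)) ∧
      (∀ (i : m) (j : n),
        Φ (Matrix.single (.inl i) (.inr j) 1 + Matrix.single (.inr j) (.inl i) 1) =
          ε • (u (.inl i) * u (.inr j) + v (.inl i) * v (.inr j))) := by
  refine ⟨(h.partialFourier hε).jordanSchwingerHom, fun i j => ?_, fun i j => ?_, fun i j => ?_⟩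
  · simp [IsCanonicalPair.jordanSchwingerHom_single_one, neg_add_eq_sub]
  -- `(ε v_i) (ε u_j) = -(u_j v_i + δ_{ij})`, and the symmetric `δ_{ij}` cancels.
  · simp [IsCanonicalPair.jordanSchwingerHom_single_one, smul_smul, hε, h.mul_eq_add_ite,
      eq_comm (a := j)]
  · simp [IsCanonicalPair.jordanSchwingerHom_single_one, (h.commute_right (.inr j) (.inl i)).eq]

theorem stmt_2 (p q : ℕ) (hp : 1 ≤ p) (hq : 1 ≤ q) :
    ∃ Φ : Matrix (Fin (p + q)) (Fin (p + q)) ℂ →ₗ[ℂ] Module.End ℂ (Rpq p q),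
      (∀ A B : Matrix (Fin (p + q)) (Fin (p + q)) ℂ,
        A.transpose * IpqC p q + IpqC p q * A = 0 → B.transpose * IpqC p q + IpqC p q * B = 0 →
        Φ (A * B - B * A) = Φ A * Φ B - Φ B * Φ A) ∧
      (∀ i j : Fin p,
        Φ (Matrix.single (Fin.castAdd q i) (Fin.castAdd q j) 1 -
            Matrix.single (Fin.castAdd q j) (Fin.castAdd q i) 1) =
          -(xop p q j * dx p q i) + xop p q i * dx p q j) ∧
      (∀ i j : Fin q,
        Φ (Matrix.single (Fin.natAdd p i) (Fin.natAdd p j) 1 -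
            Matrix.single (Fin.natAdd p j) (Fin.natAdd p i) 1) =
          -(yop p q j * dy p q i) + yop p q i * dy p q j) ∧
      (∀ (i : Fin p) (j : Fin q),
        Φ (Matrix.single (Fin.castAdd q i) (Fin.natAdd p j) 1 +
            Matrix.single (Fin.natAdd p j) (Fin.castAdd q i) 1) =
          Complex.I • (xop p q i * yop p q j + dx p q i * dy p q j)) := by
  obtain ⟨Φ, map_left, map_right, map_mixed⟩ :=
    stmt_2_general (isCanonicalPair_X_pderiv ℂ (Fin p ⊕ Fin q)) Complex.I_mul_I
  refine ⟨Φ.comp (Matrix.reindexLieEquiv finSumFinEquiv.symm).toLieHom,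
    fun A B _ _ => LieHom.map_lie _ A B, fun i j => ?_, fun i j => ?_, fun i j => ?_⟩
  · simpa [Matrix.submatrix_sub, xop, dx] using map_left i j
  · simpa [Matrix.submatrix_sub, yop, dy] using map_right i j
  · simpa [Matrix.submatrix_add, xop, yop, dx, dy] using map_mixed i j
end

section
/- There exists a Lie algebra homomorphism π♯ from the Lie algebra 𝔬_{p+q}(ℂ) := { X ∈ M_{p+q}(ℂ) : Xᵀ·I_{p,q} + I_{p,q}·X = 0 } (with the commutator bracket, where I_{p,q} = diag(1_p,−1_q)) to the ℂ-linear endomorphisms of R such that, writing E_{a,b} for the matrix units: π♯(E_{i,j} − E_{j,i}) = −x_j∂_{x_i} + x_i∂_{x_j} for all 1 ≤ i,j ≤ p; π♯(E_{p+i,p+j} − E_{p+j,p+i}) = −y_j∂_{y_i} + y_i∂_{y_j} for all 1 ≤ i,j ≤ q; and π♯(E_{i,p+j} + E_{p+j,i}) = −(x_i∂_{y_j} + y_j∂_{x_i}) for all 1 ≤ i ≤ p, 1 ≤ j ≤ q. -/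
/-!
The matrix group acts on polynomial functions by `(g • f) v = f (g⁻¹ v)`. Differentiating along
`g = exp (t A)` at `t = 0` sends `A` to the linear vector field `-∑ A a b x_b ∂_a`, which is a Lie
algebra representation of all of `𝔤𝔩`. It sends the matrix unit `E_{a,b}` to `-x_b ∂_a`. Since
`𝔬_{p,q}` sits in `𝔤𝔩_{p+q}`, the signature enters only through the choice of generators.
-/

open MvPolynomial

attribute [local instance] LieRing.ofAssociativeRing

section LinearVectorField

variable {R ι : Type*} [CommRing R] [Fintype ι]

/-- The linear vector field `-∑ A a b x_b ∂_a` of a square matrix `A`, as a derivation of the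
polynomial ring: the derivative at `t = 0` of the polynomial functions `v ↦ f (exp (-t A) v)`. -/
noncomputable def linearVectorField (A : Matrix ι ι R) :
    Derivation R (MvPolynomial ι R) (MvPolynomial ι R) :=
  mkDerivation R fun a => -∑ b, A a b • X b

@[simp]
lemma linearVectorField_X (A : Matrix ι ι R) (a : ι) :
    linearVectorField A (X a) = -∑ b, A a b • X b :=
  mkDerivation_X R _ a

lemma linearVectorField_add (A B : Matrix ι ι R) :
    linearVectorField (A + B) = linearVectorField A + linearVectorField B := by
  ext1 a
  simp only [Derivation.add_apply, linearVectorField_X, Matrix.add_apply, add_smul,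
    Finset.sum_add_distrib, neg_add]

lemma linearVectorField_smul (c : R) (A : Matrix ι ι R) :
    linearVectorField (c • A) = c • linearVectorField A := by
  ext1 a
  simp only [Derivation.smul_apply, linearVectorField_X, Matrix.smul_apply, smul_assoc,
    Finset.smul_sum, smul_neg]

-- Composition reverses the order of the matrices; the sign in `linearVectorField` turns this
-- anti-homomorphism into a homomorphism of Lie algebras.
lemma linearVectorField_linearVectorField_X (A B : Matrix ι ι R) (a : ι) :
    linearVectorField A (linearVectorField B (X a)) = ∑ c, (B * A) a c • X c := by
  calc linearVectorField A (linearVectorField B (X a))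
      = ∑ b, ∑ c, (B a b * A b c) • X c := by
        simp only [linearVectorField_X, map_neg, map_sum, Derivation.map_smul, smul_neg,
          Finset.sum_neg_distrib, neg_neg, Finset.smul_sum, smul_smul]
    _ = ∑ c, (B * A) a c • X c := by
        rw [Finset.sum_comm]
        simp only [Matrix.mul_apply, Finset.sum_smul]

lemma linearVectorField_lie (A B : Matrix ι ι R) :
    linearVectorField ⁅A, B⁆ = ⁅linearVectorField A, linearVectorField B⁆ := by
  ext1 a
  rw [Derivation.commutator_apply, linearVectorField_linearVectorField_X,
    linearVectorField_linearVectorField_X, linearVectorField_X]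
  simp only [Ring.lie_def, Matrix.sub_apply, sub_smul, Finset.sum_sub_distrib, neg_sub]

lemma linearVectorField_single [DecidableEq ι] (a b : ι) (r : R) :
    linearVectorField (Matrix.single a b r) = -(r • (X b : MvPolynomial ι R) • pderiv a) := by
  ext1 c
  rcases eq_or_ne a c with rfl | hac
  · simp [Matrix.single_apply, ite_smul]
  · simp [hac, pderiv_X_of_ne hac.symm]

variable (R ι) in
/-- The representation of `𝔤𝔩` on polynomials by linear vector fields. -/
noncomputable def polynomialRep [DecidableEq ι] :
    Matrix ι ι R →ₗ⁅R⁆ Module.End R (MvPolynomial ι R) :=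
  (LieModule.toEnd R (Derivation R (MvPolynomial ι R) (MvPolynomial ι R)) (MvPolynomial ι R)).comp
    { toFun := linearVectorField
      map_add' := linearVectorField_add
      map_smul' := linearVectorField_smul
      map_lie' := linearVectorField_lie _ _ }

lemma polynomialRep_apply [DecidableEq ι] (A : Matrix ι ι R) (f : MvPolynomial ι R) :
    polynomialRep R ι A f = linearVectorField A f :=
  rfl

lemma polynomialRep_single [DecidableEq ι] (a b : ι) :
    polynomialRep R ι (Matrix.single a b 1) =
      -(LinearMap.mulLeft R (X b) * (pderiv a).toLinearMap) := by
  refine LinearMap.ext fun f => ?_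
  simp [polynomialRep_apply, linearVectorField_single]

end LinearVectorField

theorem stmt_3_general {R ι κ : Type*} [CommRing R] [Fintype κ] [DecidableEq κ] (e : ι ≃ κ) :
    ∃ Φ : Matrix κ κ R →ₗ⁅R⁆ Module.End R (MvPolynomial ι R),
      ∀ a b, Φ (Matrix.single (e a) (e b) 1) =
        -(LinearMap.mulLeft R (X b) * (pderiv a).toLinearMap) := by
  have : Fintype ι := Fintype.ofEquiv κ e.symm
  classical
  exact ⟨(polynomialRep R ι).comp (Matrix.reindexLieEquiv e.symm).toLieHom, fun a b => by
    simp [polynomialRep_single]⟩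

theorem stmt_3 (p q : ℕ) (hp : 1 ≤ p) (hq : 1 ≤ q) :
    ∃ Φ : Matrix (Fin (p + q)) (Fin (p + q)) ℂ →ₗ[ℂ] Module.End ℂ (Rpq p q),
      (∀ A B : Matrix (Fin (p + q)) (Fin (p + q)) ℂ,
        A.transpose * IpqC p q + IpqC p q * A = 0 →
        B.transpose * IpqC p q + IpqC p q * B = 0 →
        Φ (A * B - B * A) = Φ A * Φ B - Φ B * Φ A) ∧
      (∀ i j : Fin p,
        Φ (Matrix.single (Fin.castAdd q i) (Fin.castAdd q j) 1 -
            Matrix.single (Fin.castAdd q j) (Fin.castAdd q i) 1) =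
          -(xop p q j * dx p q i) + xop p q i * dx p q j) ∧
      (∀ i j : Fin q,
        Φ (Matrix.single (Fin.natAdd p i) (Fin.natAdd p j) 1 -
            Matrix.single (Fin.natAdd p j) (Fin.natAdd p i) 1) =
          -(yop p q j * dy p q i) + yop p q i * dy p q j) ∧
      (∀ (i : Fin p) (j : Fin q),
        Φ (Matrix.single (Fin.castAdd q i) (Fin.natAdd p j) 1 +
            Matrix.single (Fin.natAdd p j) (Fin.castAdd q i) 1) =
          -(xop p q i * dy p q j + yop p q j * dx p q i)) := by
  obtain ⟨Φ, hΦ⟩ := stmt_3_general (R := ℂ) (finSumFinEquiv (m := p) (n := q))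
  refine ⟨Φ.toLinearMap, fun A B _ _ => Φ.map_lie A B, fun i j => ?_, fun i j => ?_, fun i j => ?_⟩
  all_goals
    simp only [← finSumFinEquiv_apply_left, ← finSumFinEquiv_apply_right, LieHom.coe_toLinearMap,
      map_sub, map_add, hΦ, sub_neg_eq_add, neg_add_rev, xop, yop, dx, dy]
end
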